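/- Let X be a compact homogeneous Hausdorff space. Then |X| ≤ 2^{t(X)}, where t(X) is the tightness of X. In particular, every compact homogeneous space of countable tightness has cardinality at most 𝔠. -/

import Mathlib

open Set Cardinal TopologicalSpace

universe u

/-!
Compactness and tightness at most `κ` exclude free sequences of length `κ⁺`: they would accumulate
at a point in the closure of all final segments, which by tightness is also in the closure of an
initial segment. Recursions that would otherwise produce such a sequence must therefore break off,
which gives every point a local π-base of size at most `κ` (Shapirovskiĭ), and gives a nonempty
`G_κ`-set inside the closure of a set of size at most `κ`. By homogeneity, translates of that
`G_κ`-set cover `X`; `2 ^ κ` of them suffice (Pytkeev), so `X` has a dense set `D` with at most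
`2 ^ κ` points. Finally, fix `p`, a small local π-base `V` at `p`, and homeomorphisms `e x` with
`e x p = x`. Choosing a point of `D` in `e x '' A` for each `A ∈ V` determines `x` (van Mill), so
`#X ≤ #D ^ #V ≤ (2 ^ κ) ^ κ`.
-/

open Topology

section Cardinality

variable {X : Type u}

theorem mk_biUnion_le_of_le {ι : Type u} {c : Cardinal.{u}} (hc : ℵ₀ ≤ c) {S : Set ι}
    {A : ι → Set X} (hS : #S ≤ c) (hA : ∀ i ∈ S, #(A i) ≤ c) : #(⋃ i ∈ S, A i) ≤ c :=
  calc #(⋃ i ∈ S, A i) ≤ #S * ⨆ i : S, #(A i) := mk_biUnion_le A S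
    _ ≤ c * c := mul_le_mul' hS (ciSup_le' fun i => hA i i.2)
    _ = c := mul_eq_self hc

theorem mk_prod_le_of_le {α β : Type u} {c : Cardinal.{u}} (hc : ℵ₀ ≤ c) (hα : #α ≤ c)
    (hβ : #β ≤ c) : #(α × β) ≤ c := by
  rw [mk_prod, lift_id, lift_id]
  exact (mul_le_mul' hα hβ).trans (mul_eq_self hc).le

theorem mk_finset_le_of_le {α : Type u} {c : Cardinal.{u}} (hc : ℵ₀ ≤ c) (hα : #α ≤ c) :
    #(Finset α) ≤ c := by
  cases finite_or_infinite α
  · exact (mk_lt_aleph0_iff.2 inferInstance).le.trans hc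
  · rwa [mk_finset_of_infinite]

theorem two_power_power_self {κ : Cardinal.{u}} (hκ : ℵ₀ ≤ κ) :
    ((2 : Cardinal) ^ κ) ^ κ = 2 ^ κ := by
  rw [← power_mul, mul_eq_self hκ]

theorem exists_range_eq_of_mk_le {A : Set X} (hA : A.Nonempty) {K : Type u} (h : #A ≤ #K) :
    ∃ a : K → X, range a = A := by
  obtain ⟨g⟩ := h
  have : Nonempty A := hA.to_subtype
  refine ⟨(↑) ∘ Function.invFun g, ?_⟩
  rw [(Function.invFun_surjective g.injective).range_comp, Subtype.range_coe]

/-- A downward Löwenheim–Skolem argument: `H` consists of the values of all well-founded terms in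
Skolem functions, and such terms form a W-type. -/
theorem exists_reflecting_set [Nonempty X] {K T : Type u} {c : Cardinal.{u}} (hc : ℵ₀ ≤ c)
    (hT : #T ≤ c) (hK : c ^ #K ≤ c) (P : T → (K → X) → X → Prop) :
    ∃ H : Set X, H.Nonempty ∧ #H ≤ c ∧
      ∀ t a, range a ⊆ H → (∃ x, P t a x) → ∃ x ∈ H, P t a x := by
  let arity : Option T → Type u := fun t => t.elim PEmpty fun _ => K
  let eval : WType arity → X := WType.elim X fun
    | ⟨none, _⟩ => Classical.arbitrary X
    | ⟨some t, a⟩ => Classical.epsilon (P t a)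
  refine ⟨range eval, ⟨_, mem_range_self ⟨none, PEmpty.elim⟩⟩, mk_range_le.trans ?_,
    fun t a ha hx => ?_⟩
  · have power_arity_le (t : Option T) : c ^ #(arity t) ≤ c := by
      cases t with
      | none => simpa [arity] using one_le_aleph0.trans hc
      | some t => exact hK
    refine WType.cardinalMk_le_of_le ?_
    calc Cardinal.sum (fun t => c ^ #(arity t)) ≤ Cardinal.sum fun _ : Option T => c :=
          sum_le_sum _ _ power_arity_le
      _ = #(Option T) * c := sum_const' _ _
      _ ≤ c * c := by
        rw [mk_option]
        exact mul_le_mul_left (add_le_of_le hc hT (one_le_aleph0.trans hc)) c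
      _ = c := mul_eq_self hc
  · choose w hw using fun k => ha (mem_range_self k)
    obtain rfl : (fun k => eval (w k)) = a := funext hw
    exact ⟨_, ⟨.mk (some t) w, rfl⟩, Classical.epsilon_spec hx⟩

end Cardinality

section TransfiniteSequences

theorem exists_transfinite_seq {I : Type*} [Preorder I] [WellFoundedLT I] {σ : Type*}
    (R : ∀ α : I, (Iio α → σ) → σ → Prop)
    (hR : ∀ (α : I) (s : Iio α → σ),
      (∀ β : Iio α, R β (fun γ => s ⟨γ, γ.2.trans β.2⟩) (s β)) → ∃ t, R α s t) :
    ∃ s : I → σ, ∀ α, R α (fun β => s β) (s α) := by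
  obtain _ | hI := isEmpty_or_nonempty I
  · exact ⟨isEmptyElim, isEmptyElim⟩
  obtain ⟨m, -, hm⟩ := wellFounded_lt.has_min (univ : Set I) univ_nonempty
  have : IsEmpty (Iio m) := ⟨fun β => hm β trivial β.2⟩
  have : Nonempty σ := (hR m isEmptyElim isEmptyElim).nonempty
  let step (α : I) (s : ∀ β, β < α → σ) : σ := Classical.epsilon (R α fun β => s β β.2)
  let s : I → σ := wellFounded_lt.fix step
  have hs (α : I) : s α = Classical.epsilon (R α fun β => s β) := wellFounded_lt.fix_eq step α
  refine ⟨s, fun α => ?_⟩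
  induction α using WellFoundedLT.induction with
  | ind α ih =>
    rw [hs α]
    exact Classical.epsilon_spec (hR α _ fun β => ih β β.2)

theorem mk_Iio_toType_ord_succ_le {κ : Cardinal.{u}} (α : (Order.succ κ).ord.ToType) :
    #(Iio α) ≤ κ :=
  Order.lt_succ_iff.1 ((mk_Iio_lt α (by simp)).trans_eq (mk_ord_toType _))

theorem lt_cof_toType_ord_succ {κ : Cardinal.{u}} (hκ : ℵ₀ ≤ κ) :
    κ < Order.cof (Order.succ κ).ord.ToType := by
  rw [Ordinal.cof_toType, (isRegular_succ hκ).cof_ord]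
  exact Order.lt_succ κ

theorem exists_forall_lt_of_mk_lt_cof {I : Type u} [LinearOrder I] {S : Set I}
    (hS : #S < Order.cof I) : ∃ α, ∀ β ∈ S, β < α := by
  by_contra! h
  exact (Order.cof_le h).not_gt hS

end TransfiniteSequences

section GκSets

variable {X : Type u} [TopologicalSpace X] {κ : Cardinal.{u}} {s : Set X}

/-- The `G_κ`-sets: intersections of at most `κ` open sets. -/
def IsGκ (κ : Cardinal.{u}) (s : Set X) : Prop :=
  ∃ T : Set (Set X), (∀ t ∈ T, IsOpen t) ∧ #T ≤ κ ∧ s = ⋂₀ T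

theorem isGκ_of_isGδ (hκ : ℵ₀ ≤ κ) (hs : IsGδ s) : IsGκ κ s := by
  obtain ⟨T, hT, hTc, rfl⟩ := hs
  exact ⟨T, hT, hTc.le_aleph0.trans hκ, rfl⟩

theorem isGκ_iInter_of_isOpen {ι : Type u} (hι : #ι ≤ κ) {U : ι → Set X}
    (hU : ∀ i, IsOpen (U i)) : IsGκ κ (⋂ i, U i) :=
  ⟨range U, forall_mem_range.2 hU, mk_range_le.trans hι, (sInter_range U).symm⟩

theorem IsGκ.exists_eq_iInter (hs : IsGκ κ s) :
    ∃ U : κ.out → Set X, (∀ k, IsOpen (U k)) ∧ s = ⋂ k, U k := by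
  obtain ⟨T, hT, hTκ, rfl⟩ := hs
  obtain rfl | hne := T.eq_empty_or_nonempty
  · exact ⟨fun _ => Set.univ, fun _ => isOpen_univ, by simp⟩
  · obtain ⟨U, rfl⟩ := exists_range_eq_of_mk_le hne (hTκ.trans_eq (mk_out κ).symm)
    exact ⟨U, forall_mem_range.1 hT, sInter_range U⟩

theorem IsGκ.preimage {Y : Type u} [TopologicalSpace Y] {f : Y → X} (hs : IsGκ κ s)
    (hf : Continuous f) : IsGκ κ (f ⁻¹' s) := by
  obtain ⟨U, hU, rfl⟩ := hs.exists_eq_iInter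
  rw [preimage_iInter]
  exact isGκ_iInter_of_isOpen (mk_out κ).le fun k => (hU k).preimage hf

theorem IsGκ.iInter (hκ : ℵ₀ ≤ κ) {ι : Type u} (hι : #ι ≤ κ) {s : ι → Set X}
    (hs : ∀ i, IsGκ κ (s i)) : IsGκ κ (⋂ i, s i) := by
  choose U hU hsU using fun i => (hs i).exists_eq_iInter
  have iInter_eq : ⋂ i, s i = ⋂ p : ι × κ.out, U p.1 p.2 := by
    ext
    simp [hsU]
  rw [iInter_eq]
  exact isGκ_iInter_of_isOpen (mk_prod_le_of_le hκ hι (mk_out κ).le) fun p => hU p.1 p.2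

end GκSets

section Tightness

variable {X : Type u} [TopologicalSpace X] {κ : Cardinal.{u}}

/-- The tightness of `X` is at most `κ`, stated directly rather than as a bound on a cardinal
`t(X)`. -/
def TightnessLE (X : Type u) [TopologicalSpace X] (κ : Cardinal.{u}) : Prop :=
  ∀ (A : Set X) (x : X), x ∈ closure A → ∃ B ⊆ A, #B ≤ κ ∧ x ∈ closure B

/-- A free sequence: every initial segment and the complementary final segment have disjoint
closures. -/
def IsFreeSequence {I : Type*} [Preorder I] (x : I → X) : Prop :=
  ∀ α, Disjoint (closure (x '' Iio α)) (closure (x '' Ici α))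

theorem TightnessLE.exists_mem_closure_range (ht : TightnessLE X κ) {A : Set X} {x : X}
    (hx : x ∈ closure A) : ∃ a : κ.out → X, range a ⊆ A ∧ x ∈ closure (range a) := by
  obtain ⟨B, hBA, hBκ, hxB⟩ := ht A x hx
  obtain ⟨a, rfl⟩ := exists_range_eq_of_mk_le (closure_nonempty_iff.1 ⟨x, hxB⟩)
    (hBκ.trans_eq (mk_out κ).symm)
  exact ⟨a, hBA, hxB⟩

theorem nonempty_iInter_of_forall_le_mem [CompactSpace X] [Nonempty X] {I : Type*} [Preorder I]
    [IsDirectedOrder I] {F : I → Set X} (hF : ∀ α, IsClosed (F α)) (x : I → X)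
    (hx : ∀ α β, α ≤ β → x β ∈ F α) : (⋂ α, F α).Nonempty := by
  obtain _ | _ := isEmpty_or_nonempty I
  · simp
  refine CompactSpace.iInter_nonempty hF fun t => ?_
  obtain ⟨β, hβ⟩ := t.exists_le
  exact ⟨x β, mem_iInter₂.2 fun α hα => hx α β (hβ α hα)⟩

theorem TightnessLE.not_isFreeSequence [CompactSpace X] (ht : TightnessLE X κ) {I : Type u}
    [LinearOrder I] (hI : κ < Order.cof I) (x : I → X) : ¬ IsFreeSequence x := by
  intro hfree
  obtain ⟨α₀⟩ : Nonempty I := Order.cof_ne_zero_iff.1 (zero_le.trans_lt hI).ne'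
  have : Nonempty X := ⟨x α₀⟩
  obtain ⟨y, hy⟩ := nonempty_iInter_of_forall_le_mem (fun α => isClosed_closure) x
    fun α β hαβ => subset_closure (mem_image_of_mem x (mem_Ici.2 hαβ))
  rw [mem_iInter] at hy
  obtain ⟨a, hax, hya⟩ := ht.exists_mem_closure_range
    (closure_mono (image_subset_range x _) (hy α₀))
  choose i hi using fun k => hax (mem_range_self k)
  obtain ⟨α, hα⟩ := exists_forall_lt_of_mk_lt_cof
    ((mk_range_le (f := i)).trans_lt ((mk_out κ).trans_lt hI))
  have range_subset : range a ⊆ x '' Iio α :=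
    range_subset_iff.2 fun k => ⟨i k, hα _ (mem_range_self k), hi k⟩
  exact Set.disjoint_left.1 (hfree α) (closure_mono range_subset hya) (hy α)

theorem exists_continuousMap_zero_one [CompletelyRegularSpace X] {C : Set X} (hC : IsClosed C)
    {x : X} (hx : x ∉ C) : ∃ f : C(X, ℝ), f x = 0 ∧ ∀ y ∈ C, f y = 1 := by
  obtain ⟨f, hf, hfx, hfC⟩ := CompletelyRegularSpace.completely_regular x C hC hx
  exact ⟨⟨fun y => f y, by fun_prop⟩, by simp [hfx], fun y hy => by simp [hfC hy]⟩

theorem isFreeSequence_of_continuousMap {I : Type*} [LinearOrder I] {x : I → X} (f : I → C(X, ℝ))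
    (hle : ∀ α β, α ≤ β → f α (x β) ≤ 0) (hlt : ∀ α β, β < α → 1 ≤ f α (x β)) :
    IsFreeSequence x := by
  intro α
  have h_initial : closure (x '' Iio α) ⊆ f α ⁻¹' Ici 1 :=
    closure_minimal (image_subset_iff.2 fun β => hlt α β) (isClosed_Ici.preimage (f α).continuous)
  have h_final : closure (x '' Ici α) ⊆ f α ⁻¹' Iic 0 :=
    closure_minimal (image_subset_iff.2 fun β => hle α β) (isClosed_Iic.preimage (f α).continuous)
  exact (((Iic_disjoint_Ici.2 (by norm_num)).preimage (f α)).symm).mono h_initial h_final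

theorem TightnessLE.exists_isGκ_subset_closure [CompactSpace X] [CompletelyRegularSpace X]
    [Nonempty X] (ht : TightnessLE X κ) (hκ : ℵ₀ ≤ κ) :
    ∃ G S : Set X, IsGκ κ G ∧ G.Nonempty ∧ #S ≤ κ ∧ G ⊆ closure S := by
  by_contra! H
  obtain ⟨s, hs⟩ := exists_transfinite_seq (I := (Order.succ κ).ord.ToType) (σ := X × C(X, ℝ))
    (fun α s t => (∀ β, (s β).2 t.1 = 0) ∧ t.2 t.1 = 0 ∧ ∀ β, t.2 (s β).1 = 1) fun α s hs => by
      have hG : IsGκ κ (⋂ β, (s β).2 ⁻¹' {0}) := .iInter hκ (mk_Iio_toType_ord_succ_le α)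
        fun β => isGκ_of_isGδ hκ (isClosed_singleton.isGδ.preimage (s β).2.continuous)
      have hG_nonempty : (⋂ β, (s β).2 ⁻¹' {0}).Nonempty :=
        nonempty_iInter_of_forall_le_mem
          (fun β => isClosed_singleton.preimage (s β).2.continuous) (fun β => (s β).1)
          fun β γ h => by
            obtain rfl | h := h.eq_or_lt
            exacts [(hs β).2.1, (hs γ).1 ⟨β, h⟩]
      obtain ⟨z, hzG, hzS⟩ := not_subset.1 <| H _ (range fun β => (s β).1) hG hG_nonempty
        (mk_range_le.trans (mk_Iio_toType_ord_succ_le α))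
      obtain ⟨f, hfz, hfS⟩ := exists_continuousMap_zero_one isClosed_closure hzS
      exact ⟨(z, f), by simpa using hzG, hfz, fun β => hfS _ (subset_closure (mem_range_self β))⟩
  refine ht.not_isFreeSequence (lt_cof_toType_ord_succ hκ) (fun α => (s α).1) <|
    isFreeSequence_of_continuousMap (fun α => (s α).2) (fun α β h => ?_)
      fun α β h => ((hs α).2.2 ⟨β, h⟩).ge
  obtain rfl | h := h.eq_or_lt
  exacts [(hs α).2.1.le, ((hs β).1 ⟨α, h⟩).le]

end Tightness

section LocalPiBase

variable {X : Type u} [TopologicalSpace X] {κ : Cardinal.{u}}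

/-- A local π-base at `p`: a family of nonempty open sets, not required to contain `p`, such that
every neighborhood of `p` contains one of them. -/
structure IsLocalPiBase (p : X) (V : Set (Set X)) : Prop where
  isOpen : ∀ A ∈ V, IsOpen A
  nonempty : ∀ A ∈ V, A.Nonempty
  exists_subset : ∀ W ∈ 𝓝 p, ∃ A ∈ V, A ⊆ W

/-- The open set cut out by the conditions `f i < 0` for `i ∈ a` and `1 < f i` for `i ∈ b`. In the
construction of a local π-base, the nonempty cells are the candidate members. -/
def cell {J : Type*} (f : J → C(X, ℝ)) (a b : Finset J) : Set X :=
  {x | (∀ i ∈ a, f i x < 0) ∧ ∀ i ∈ b, 1 < f i x}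

theorem isOpen_cell {J : Type*} (f : J → C(X, ℝ)) (a b : Finset J) : IsOpen (cell f a b) := by
  have : cell f a b = (⋂ i ∈ a, f i ⁻¹' Iio 0) ∩ ⋂ i ∈ b, f i ⁻¹' Ioi 1 := by
    ext
    simp [cell]
  rw [this]
  exact (isOpen_biInter_finset fun i _ => isOpen_Iio.preimage (f i).continuous).inter
    (isOpen_biInter_finset fun i _ => isOpen_Ioi.preimage (f i).continuous)

theorem exists_continuousMap_neg_of_not_isLocalPiBase [CompletelyRegularSpace X] {p : X}
    {V : Set (Set X)} (hopen : ∀ A ∈ V, IsOpen A) (hne : ∀ A ∈ V, A.Nonempty)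
    (hV : ¬ IsLocalPiBase p V) : ∃ f : C(X, ℝ), f p < 0 ∧ ∀ A ∈ V, ∃ x ∈ A, 1 < f x := by
  obtain ⟨W, hW, hVW⟩ : ∃ W ∈ 𝓝 p, ∀ A ∈ V, ¬ A ⊆ W := by
    by_contra! h
    exact hV ⟨hopen, hne, h⟩
  obtain ⟨f, hfp, hfW⟩ := exists_continuousMap_zero_one (C := (interior W)ᶜ)
    isOpen_interior.isClosed_compl (not_not.2 (mem_interior_iff_mem_nhds.2 hW))
  refine ⟨⟨fun x => 3 * f x - 1, by fun_prop⟩, by simp [hfp], fun A hA => ?_⟩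
  obtain ⟨x, hxA, hxW⟩ := not_subset.1 (hVW A hA)
  have hfx : f x = 1 := hfW x fun h => hxW (interior_subset h)
  exact ⟨x, hxA, by norm_num [hfx]⟩

theorem cell_nonempty_of_forall_lt {I : Type*} [LinearOrder I] {f : I → C(X, ℝ)} {p : X}
    (hp : ∀ α, f α p < 0)
    (hf : ∀ α (a b : Finset (Iio α)), (cell (fun β : Iio α => f β) a b).Nonempty →
      ∃ x ∈ cell (fun β : Iio α => f β) a b, 1 < f α x)
    {a b : Finset I} (hab : ∀ β ∈ a, ∀ γ ∈ b, β < γ) : (cell f a b).Nonempty := by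
  classical
  induction b using Finset.induction_on_max with
  | empty => exact ⟨p, fun α _ => hp α, by simp⟩
  | insert γ b hb ih =>
    have ha : ∀ β ∈ a, β < γ := fun β hβ => hab β hβ γ (Finset.mem_insert_self γ b)
    have cell_restrict : cell (fun β : Iio γ => f β) (a.subtype (· ∈ Iio γ))
        (b.subtype (· ∈ Iio γ)) = cell f a b := by
      ext x
      simp only [cell, mem_ofPred_eq, Finset.mem_subtype, Subtype.forall, mem_Iio]
      exact ⟨fun h => ⟨fun i hi => h.1 i (ha i hi) hi, fun i hi => h.2 i (hb i hi) hi⟩,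
        fun h => ⟨fun i _ => h.1 i, fun i _ => h.2 i⟩⟩
    obtain ⟨x, hx, hxγ⟩ := hf γ (a.subtype (· ∈ Iio γ)) (b.subtype (· ∈ Iio γ)) <| cell_restrict ▸
      ih fun β hβ δ hδ => hab β hβ δ (Finset.mem_insert_of_mem hδ)
    rw [cell_restrict] at hx
    exact ⟨x, hx.1, (Finset.forall_mem_insert _ _ _).2 ⟨hxγ, hx.2⟩⟩

theorem exists_forall_le_and_forall_ge_of_cell_nonempty [CompactSpace X] {I : Type*} [LinearOrder I]
    {f : I → C(X, ℝ)}
    (hf : ∀ a b : Finset I, (∀ β ∈ a, ∀ γ ∈ b, β < γ) → (cell f a b).Nonempty) (α : I) :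
    ∃ x, (∀ β ≤ α, f β x ≤ 0) ∧ ∀ β, α < β → 1 ≤ f β x := by
  let F (β : I) : Set X := f β ⁻¹' if β ≤ α then Iic 0 else Ici 1
  obtain ⟨x, hx⟩ : (⋂ β, F β).Nonempty := by
    refine CompactSpace.iInter_nonempty (fun β => ?_) fun t => ?_
    · refine IsClosed.preimage (f β).continuous ?_
      split_ifs
      exacts [isClosed_Iic, isClosed_Ici]
    · obtain ⟨x, hx0, hx1⟩ := hf (t.filter (· ≤ α)) (t.filter (α < ·)) fun β hβ γ hγ =>
        (Finset.mem_filter.1 hβ).2.trans_lt (Finset.mem_filter.1 hγ).2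
      refine ⟨x, mem_iInter₂.2 fun β hβ => ?_⟩
      by_cases h : β ≤ α
      · simpa [F, h] using (hx0 β (Finset.mem_filter.2 ⟨hβ, h⟩)).le
      · simpa [F, h] using (hx1 β (Finset.mem_filter.2 ⟨hβ, not_le.1 h⟩)).le
  rw [mem_iInter] at hx
  exact ⟨x, fun β h => by simpa [F, h] using hx β, fun β h => by simpa [F, h.not_ge] using hx β⟩

theorem TightnessLE.exists_isLocalPiBase [CompactSpace X] [CompletelyRegularSpace X]
    (ht : TightnessLE X κ) (hκ : ℵ₀ ≤ κ) (p : X) : ∃ V, IsLocalPiBase p V ∧ #V ≤ κ := by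
  by_contra! H
  obtain ⟨f, hf⟩ := exists_transfinite_seq (I := (Order.succ κ).ord.ToType)
    (fun α (f : Iio α → C(X, ℝ)) (g : C(X, ℝ)) => g p < 0 ∧
      ∀ a b, (cell f a b).Nonempty → ∃ x ∈ cell f a b, 1 < g x) fun α f _ => by
      let V : Set (Set X) :=
        {A ∈ range fun ab : Finset _ × Finset _ => cell f ab.1 ab.2 | A.Nonempty}
      have hV : #V ≤ κ :=
        have := mk_finset_le_of_le hκ (mk_Iio_toType_ord_succ_le α)
        (mk_le_mk_of_subset (sep_subset _ _)).trans
          (mk_range_le.trans (mk_prod_le_of_le hκ this this))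
      obtain ⟨g, hgp, hgV⟩ := exists_continuousMap_neg_of_not_isLocalPiBase (p := p) (V := V)
        (by rintro _ ⟨⟨ab, rfl⟩, -⟩; exact isOpen_cell f _ _) (fun A hA => hA.2)
        fun hbase => (H V hbase).not_ge hV
      exact ⟨g, hgp, fun a b hab => hgV _ ⟨⟨(a, b), rfl⟩, hab⟩⟩
  choose x hx0 hx1 using exists_forall_le_and_forall_ge_of_cell_nonempty fun a b hab =>
    cell_nonempty_of_forall_lt (fun α => (hf α).1) (fun α => (hf α).2) hab
  exact ht.not_isFreeSequence (lt_cof_toType_ord_succ hκ) x <|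
    isFreeSequence_of_continuousMap f (fun α β h => hx0 β α h) fun α β h => hx1 β α h

theorem IsLocalPiBase.mk_le_power [T2Space X] {p : X} {V : Set (Set X)} (hV : IsLocalPiBase p V)
    (hhom : ∀ x : X, ∃ e : X ≃ₜ X, e p = x) {D : Set X} (hD : Dense D) : #X ≤ #D ^ #V := by
  choose e he using hhom
  have exists_dense_mem (x : X) (A : V) : ∃ d : D, (e x).symm d ∈ (A : Set X) := by
    obtain ⟨d, hdA, hdD⟩ := hD.inter_open_nonempty ((e x).symm ⁻¹' A)
      ((hV.isOpen A A.2).preimage (e x).symm.continuous)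
      ((hV.nonempty A A.2).preimage (e x).symm.surjective)
    exact ⟨⟨d, hdD⟩, hdA⟩
  choose d hd using exists_dense_mem
  rw [power_def]
  refine mk_le_of_injective (f := d) fun x y hxy => ?_
  by_contra hne
  obtain ⟨A, B, hA, hB, hAB⟩ := t2_separation_nhds hne
  have hW : e x ⁻¹' A ∩ e y ⁻¹' B ∈ 𝓝 p := Filter.inter_mem
    ((e x).continuous.continuousAt (by rwa [he])) ((e y).continuous.continuousAt (by rwa [he]))
  obtain ⟨C, hCV, hCW⟩ := hV.exists_subset _ hW
  have hdA : (d x ⟨C, hCV⟩ : X) ∈ A := by simpa using (hCW (hd x ⟨C, hCV⟩)).1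
  have hdB : (d y ⟨C, hCV⟩ : X) ∈ B := by simpa using (hCW (hd y ⟨C, hCV⟩)).2
  exact Set.disjoint_left.1 hAB hdA (hxy ▸ hdB)

end LocalPiBase

section Pytkeev

variable {X : Type u} [TopologicalSpace X] {κ : Cardinal.{u}}

theorem exists_image_separating_of_isOpen [RegularSpace X] {K : Type*} (a : K → X) {x : X}
    {U : Set X} (hU : IsOpen U) (hx : x ∈ U) :
    ∃ C : Set K, x ∉ closure (a '' C) ∧ closure (range a) \ closure (a '' C) ⊆ U := by
  obtain ⟨F, hF, hFclosed, hFU⟩ := exists_mem_nhds_isClosed_subset (hU.mem_nhds hx)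
  refine ⟨a ⁻¹' Fᶜ, ?_, fun z ⟨hz, hzC⟩ => hFU ?_⟩ <;> rw [image_preimage_eq_inter_range] at *
  · have hxF : x ∉ closure Fᶜ := by rwa [closure_compl, notMem_compl_iff, mem_interior_iff_mem_nhds]
    exact fun hxC => hxF (closure_mono inter_subset_left hxC)
  · have range_subset : range a ⊆ F ∪ Fᶜ ∩ range a :=
      fun y hy => or_iff_not_imp_left.2 fun hyF => ⟨hyF, hy⟩
    have hz := closure_mono range_subset hz
    rw [closure_union, hFclosed.closure_eq] at hz
    exact hz.resolve_right hzC

/- The points `x ∈ closure (range a)` are too many to be parameters of a reflection, but all that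
matters about `x` is a family `C : K → Set K` of sets with `x ∉ closure (a '' C k)`, and there are
only `2 ^ #K` such families. -/
theorem exists_reflecting_closure_cover [RegularSpace X] [Nonempty X] {K : Type u} [Infinite K]
    {U : X → K → Set X} (hU : ∀ x k, IsOpen (U x k)) (hxU : ∀ x k, x ∈ U x k) :
    ∃ H : Set X, H.Nonempty ∧ #H ≤ 2 ^ #K ∧
      (∀ a : K → X, range a ⊆ H → closure (range a) ⊆ ⋃ y ∈ H, ⋂ k, U y k) ∧
      ∀ (a : K → X) (j : K → K), range a ⊆ H → ⋃ k, U (a k) (j k) ≠ Set.univ →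
        ¬ H ⊆ ⋃ k, U (a k) (j k) := by
  have hK : ℵ₀ ≤ #K := aleph0_le_mk K
  have hT : #((K → Set K) ⊕ (K → K)) ≤ 2 ^ #K := by
    simp only [mk_sum, lift_id, ← power_def, mk_set, two_power_power_self hK, power_self_eq hK]
    exact (add_eq_self (hK.trans (cantor _).le)).le
  obtain ⟨H, hne, hcard, hH⟩ := exists_reflecting_set (hK.trans (cantor _).le)
    hT (two_power_power_self hK).le
    (Sum.elim (fun C a y => ∀ k, closure (range a) \ closure (a '' C k) ⊆ U y k)
      fun j a q => q ∉ ⋃ k, U (a k) (j k))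
  refine ⟨H, hne, hcard, fun a ha x hx => ?_, fun a j ha hj hHU => ?_⟩
  · choose C hxC hCU using fun k => exists_image_separating_of_isOpen a (hU x k) (hxU x k)
    obtain ⟨y, hyH, hy⟩ := hH (.inl C) a ha ⟨x, hCU⟩
    exact mem_biUnion hyH (mem_iInter.2 fun k => hy k ⟨hx, hxC k⟩)
  · obtain ⟨q, hqH, hq⟩ := hH (.inr j) a ha ((ne_univ_iff_exists_notMem _).1 hj)
    exact hq (hHU hqH)

theorem TightnessLE.exists_subcover_of_isGκ [CompactSpace X] [RegularSpace X] [Nonempty X]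
    (ht : TightnessLE X κ) (hκ : ℵ₀ ≤ κ) {J : Type u} {G : J → Set X} (hG : ∀ j, IsGκ κ (G j))
    (hcover : ⋃ j, G j = Set.univ) : ∃ S : Set J, #S ≤ 2 ^ κ ∧ ⋃ j ∈ S, G j = Set.univ := by
  have : Infinite κ.out := by rwa [infinite_iff, mk_out]
  choose j hxj using iUnion_eq_univ_iff.1 hcover
  choose U hU hGU using fun x => (hG (j x)).exists_eq_iInter
  obtain ⟨H, hne, hcard, hclosure, hreflect⟩ := exists_reflecting_closure_cover hU
    fun x k => mem_iInter.1 (hGU x ▸ hxj x) k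
  refine ⟨j '' H, mk_image_le.trans (by rwa [mk_out] at hcard), eq_univ_of_forall fun q => ?_⟩
  by_contra hq
  have exists_notMem (y : X) (hy : y ∈ H) : ∃ k, q ∉ U y k := by
    by_contra! h
    exact hq (mem_biUnion (mem_image_of_mem j hy) (hGU y ▸ mem_iInter.2 h))
  choose! i hi using exists_notMem
  have closure_subset : closure H ⊆ ⋃ y ∈ H, U y (i y) := fun z hz => by
    obtain ⟨a, haH, hza⟩ := ht.exists_mem_closure_range hz
    exact biUnion_mono Subset.rfl (fun y _ => iInter_subset _ _) (hclosure a haH hza)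
  obtain ⟨t, htH, htfin, htcover⟩ := isClosed_closure.isCompact.elim_finite_subcover_image
    (fun y _ => hU y (i y)) closure_subset
  have ht_ne : t.Nonempty := by
    obtain ⟨y, hy⟩ := hne
    obtain ⟨z, hz, -⟩ := mem_iUnion₂.1 (htcover (subset_closure hy))
    exact ⟨z, hz⟩
  obtain ⟨a, rfl⟩ := exists_range_eq_of_mk_le (K := κ.out) ht_ne
    (htfin.lt_aleph0.le.trans (aleph0_le_mk _))
  rw [biUnion_range] at htcover
  refine hreflect a (fun k => i (a k)) htH (fun h => ?_) (subset_closure.trans htcover)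
  obtain ⟨k, hk⟩ := mem_iUnion.1 (h.symm.subset (mem_univ q))
  exact hi _ (htH (mem_range_self k)) hk

theorem TightnessLE.exists_dense_of_homogeneous [CompactSpace X] [CompletelyRegularSpace X]
    (ht : TightnessLE X κ) (hκ : ℵ₀ ≤ κ) (hhom : ∀ x y : X, ∃ e : X ≃ₜ X, e x = y) :
    ∃ D : Set X, Dense D ∧ #D ≤ 2 ^ κ := by
  obtain _ | _ := isEmpty_or_nonempty X
  · exact ⟨∅, isEmptyElim, by simp⟩
  obtain ⟨G, S, hG, ⟨p, hpG⟩, hS, hGS⟩ := ht.exists_isGκ_subset_closure hκ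
  choose e he using hhom p
  obtain ⟨Y, hY, hcover⟩ := ht.exists_subcover_of_isGκ hκ (G := fun x => (e x).symm ⁻¹' G)
    (fun x => hG.preimage (e x).symm.continuous)
    (iUnion_eq_univ_iff.2 fun x => ⟨x, by simpa [(e x).symm_apply_eq.2 (he x).symm]⟩)
  refine ⟨⋃ y ∈ Y, e y '' S, fun x => ?_, mk_biUnion_le_of_le (hκ.trans (cantor κ).le) hY
    fun y _ => mk_image_le.trans (hS.trans (cantor κ).le)⟩
  obtain ⟨y, hy, hxy⟩ := mem_iUnion₂.1 (hcover.symm.subset (mem_univ x))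
  refine closure_mono (subset_biUnion_of_mem (u := fun y => e y '' S) hy) ?_
  rw [← (e y).image_closure, (e y).image_eq_preimage_symm]
  exact hGS hxy

end Pytkeev

/-- (De la Vega) Let `X` be a compact homogeneous Hausdorff space. Then `|X| ≤ 2^{t(X)}`:
for every infinite cardinal `κ` bounding the tightness of `X`, `|X| ≤ 2^κ`. In particular,
a compact homogeneous space of countable tightness has cardinality at most `𝔠`. -/
theorem de_la_vega
    (X : Type u) [TopologicalSpace X] [CompactSpace X] [T2Space X]
    (hhom : ∀ x y : X, ∃ e : X ≃ₜ X, e x = y)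
    (κ : Cardinal.{u}) (hκ : ℵ₀ ≤ κ)
    (ht : ∀ (A : Set X) (x : X), x ∈ closure A → ∃ B ⊆ A, #B ≤ κ ∧ x ∈ closure B) :
    #X ≤ 2 ^ κ := by
  obtain _ | ⟨⟨p⟩⟩ := isEmpty_or_nonempty X
  · simp
  have ht : TightnessLE X κ := ht
  obtain ⟨D, hD, hDκ⟩ := ht.exists_dense_of_homogeneous hκ hhom
  obtain ⟨V, hV, hVκ⟩ := ht.exists_isLocalPiBase hκ p
  calc #X ≤ #D ^ #V := hV.mk_le_power (hhom p) hD
    _ ≤ (2 ^ κ) ^ #V := power_le_power_right hDκ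
    _ ≤ (2 ^ κ) ^ κ := power_le_power_left (power_ne_zero κ two_ne_zero) hVκ
    _ = 2 ^ κ := two_power_power_self hκ
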